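/- SO(4, ℝ) has no closed connected proper subgroup of dimension 5, and every closed connected 4-dimensional subgroup of SO(4, ℝ) is conjugate in O(4, ℝ) to the unitary group U(2) embedded in SO(4, ℝ) via the standard identification ℂ² ≅ ℝ⁴. -/

import Mathlib

open scoped ENNReal

/-- `SO(4, ℝ)` as a subset of the orthogonal group `O(4, ℝ)`. -/
def so4Set : Set ↥(Matrix.orthogonalGroup (Fin 4) ℝ) :=
  {A : ↥(Matrix.orthogonalGroup (Fin 4) ℝ) | (A : Matrix (Fin 4) (Fin 4) ℝ).det = 1}

/-- The standard complex structure `J` on `ℝ⁴ ≅ ℂ²`. -/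
def J4 : Matrix (Fin 4) (Fin 4) ℝ :=
  Matrix.of fun i j : Fin 4 =>
    if (j : ℕ) = (i : ℕ) + 2 then 1 else if (i : ℕ) = (j : ℕ) + 2 then -1 else 0

/-- The unitary group `U(2)` embedded in `SO(4, ℝ)` via the identification `ℂ² ≅ ℝ⁴`:
orthogonal matrices commuting with the standard complex structure `J`. -/
def u2Set : Set ↥(Matrix.orthogonalGroup (Fin 4) ℝ) :=
  {A : ↥(Matrix.orthogonalGroup (Fin 4) ℝ) |
    (A : Matrix (Fin 4) (Fin 4) ℝ) * J4 = J4 * (A : Matrix (Fin 4) (Fin 4) ℝ)}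

/-- The dimension of a subgroup of `O(4, ℝ)`, measured as the Hausdorff dimension of its
underlying set of matrices. -/
noncomputable def orth4SubgroupDim (H : Subgroup ↥(Matrix.orthogonalGroup (Fin 4) ℝ)) :
    ℝ≥0∞ :=
  dimH ((fun A : ↥(Matrix.orthogonalGroup (Fin 4) ℝ) =>
    fun i j : Fin 4 => (A : Matrix (Fin 4) (Fin 4) ℝ) i j) ''
      (H : Set ↥(Matrix.orthogonalGroup (Fin 4) ℝ)))

/-!
Let `𝔤` be the tangent space at `1` of a closed subgroup `H` of `O(4)`: a Lie subalgebra of `so(4)`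
which `exp` maps onto a neighbourhood of `1` in `H`, so that the Hausdorff dimension of `H` is
`dim 𝔤`. Multiplication by imaginary quaternions on the left and on the right identifies `so(4)`
with `ℝ³ × ℝ³` carrying the componentwise cross product. A subalgebra of `ℝ³` of dimension at least
two is all of `ℝ³`, so if `dim 𝔤 ≥ 4`, then `𝔤` is everything, `ℝ w × ℝ³` or `ℝ³ × ℝ w`. This
excludes dimension `5`. In dimension `4`, `𝔤` is the commutant in `so(4)` of the multiplication by
the unit imaginary quaternion `w`, which an orthogonal matrix conjugates to `J`. If `H` is
connected, it is generated by `exp 𝔤` and so lies in the commutant of that multiplication.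
Conversely every element of `U(2)` is the exponential of a skew matrix commuting with `J`, so `H` is
the whole commutant.
-/

/-! ### The tangent space of a closed group of units -/

section BanachAlgebra

open Filter Topology NormedSpace

variable {𝔸 : Type*} [NormedRing 𝔸] [NormedAlgebra ℝ 𝔸] [CompleteSpace 𝔸]

theorem continuous_exp_real : Continuous (exp : 𝔸 → 𝔸) :=
  letI := NormedAlgebra.restrictScalars ℚ ℝ 𝔸
  exp_continuous

/-- The exponential as a unit of the Banach algebra, with inverse `exp (-X)`. -/
@[simps]
noncomputable def expUnit (X : 𝔸) : 𝔸ˣ where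
  val := exp X
  inv := exp (-X)
  val_inv := letI := NormedAlgebra.restrictScalars ℚ ℝ 𝔸
    by rw [← exp_add_of_commute (Commute.refl X).neg_right, add_neg_cancel, exp_zero]
  inv_val := letI := NormedAlgebra.restrictScalars ℚ ℝ 𝔸
    by rw [← exp_add_of_commute (Commute.refl X).neg_left, neg_add_cancel, exp_zero]

theorem continuous_expUnit : Continuous (expUnit : 𝔸 → 𝔸ˣ) :=
  Units.continuous_iff.2 ⟨continuous_exp_real, continuous_exp_real.comp continuous_neg⟩

theorem expUnit_zero : expUnit (0 : 𝔸) = 1 :=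
  Units.ext exp_zero

theorem expUnit_neg (X : 𝔸) : expUnit (-X) = (expUnit X)⁻¹ :=
  Units.ext rfl

theorem expUnit_add_smul (s t : ℝ) (X : 𝔸) :
    expUnit ((s + t) • X) = expUnit (s • X) * expUnit (t • X) :=
  letI := NormedAlgebra.restrictScalars ℚ ℝ 𝔸
  Units.ext <| by
    rw [add_smul]; exact exp_add_of_commute (((Commute.refl X).smul_left s).smul_right t)

theorem expUnit_intCast_smul (k : ℤ) (X : 𝔸) : expUnit ((k : ℝ) • X) = expUnit X ^ k := by
  let φ : Multiplicative ℝ →* 𝔸ˣ :=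
    { toFun := fun t => expUnit (t.toAdd • X)
      map_one' := by simp [expUnit_zero]
      map_mul' := fun s t => expUnit_add_smul s.toAdd t.toAdd X }
  simpa [φ, ← ofAdd_zsmul] using map_zpow φ (Multiplicative.ofAdd 1) k

theorem expUnit_conj (u : 𝔸ˣ) (X : 𝔸) : expUnit (u * X * ↑u⁻¹) = u * expUnit X * u⁻¹ :=
  letI := NormedAlgebra.restrictScalars ℚ ℝ 𝔸
  Units.ext (exp_units_conj u X)

theorem hasDerivAt_exp_smul_zero (X : 𝔸) : HasDerivAt (fun t : ℝ => exp (t • X)) X 0 := by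
  simpa using hasDerivAt_exp_smul_const (𝕂 := ℝ) X (0 : ℝ)

theorem exists_log_near_one : ∃ log : 𝔸 → 𝔸, log 1 = 0 ∧
    HasFDerivAt log (ContinuousLinearMap.id ℝ 𝔸) 1 ∧ ∀ᶠ a in 𝓝 1, exp (log a) = a := by
  have hexp : HasStrictFDerivAt (exp : 𝔸 → 𝔸)
      ((ContinuousLinearEquiv.refl ℝ 𝔸 : 𝔸 ≃L[ℝ] 𝔸) : 𝔸 →L[ℝ] 𝔸) 0 :=
    hasStrictFDerivAt_exp_zero
  have hlog := hexp.to_localInverse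
  have hright := hexp.eventually_right_inverse
  rw [exp_zero] at hlog hright
  exact ⟨hexp.localInverse _ _ _, by simpa using hexp.localInverse_apply_image,
    hlog.hasFDerivAt, hright⟩

/-- `gᵏ = exp (k log g)` and `k log g = (k ε) (ε⁻¹ log g) → t X`. -/
theorem tendsto_zpow_expUnit {ι : Type*} {l : Filter ι} {g : ι → 𝔸ˣ} {ε : ι → ℝ} {k : ι → ℤ}
    {X : 𝔸} {t : ℝ} (hε : Tendsto ε l (𝓝[≠] 0))
    (hg : Tendsto (fun i => (ε i)⁻¹ • ((g i : 𝔸) - 1)) l (𝓝 X))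
    (hk : Tendsto (fun i => k i * ε i) l (𝓝 t)) :
    Tendsto (fun i => g i ^ k i) l (𝓝 (expUnit (t • X))) := by
  obtain ⟨log, log_one, hlog, exp_log⟩ := exists_log_near_one (𝔸 := 𝔸)
  have hε0 : Tendsto ε l (𝓝 0) := hε.mono_right nhdsWithin_le_nhds
  have hεne : ∀ᶠ i in l, ε i ≠ 0 := hε.eventually self_mem_nhdsWithin
  have hsub : Tendsto (fun i => (g i : 𝔸) - 1) l (𝓝 0) := by
    have := hε0.smul hg
    rw [zero_smul] at this
    exact this.congr' (hεne.mono fun i hi => smul_inv_smul₀ hi _)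
  have hg1 : Tendsto (fun i => (g i : 𝔸)) l (𝓝 1) := by simpa using hsub.add_const 1
  have hlogg : Tendsto (fun i => (ε i)⁻¹ • log (g i)) l (𝓝 X) := by
    simpa [log_one] using
      hlog.hasFDerivWithinAt.lim hsub (.of_forall fun i => Set.mem_univ _) hg
  have hexp : Tendsto (fun i => expUnit ((k i : ℝ) • log (g i))) l (𝓝 (expUnit (t • X))) := by
    refine (continuous_expUnit.tendsto _).comp ((hk.smul hlogg).congr' ?_)
    exact hεne.mono fun i hi => by simp only [mul_smul, smul_inv_smul₀ hi]
  refine hexp.congr' ((hg1.eventually exp_log).mono fun i hi => ?_)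
  rw [expUnit_intCast_smul, show expUnit (log (g i)) = g i from Units.ext hi]

theorem tendsto_floor_div_mul_self {ι : Type*} {l : Filter ι} {ε : ι → ℝ}
    (hε : Tendsto ε l (𝓝[≠] 0)) (t : ℝ) : Tendsto (fun i => (⌊t / ε i⌋ : ℝ) * ε i) l (𝓝 t) := by
  have hε0 : Tendsto ε l (𝓝 0) := hε.mono_right nhdsWithin_le_nhds
  have hfract : Tendsto (fun i => Int.fract (t / ε i) * ε i) l (𝓝 0) :=
    bdd_le_mul_tendsto_zero' 1 (.of_forall fun i => by
      rw [abs_of_nonneg (Int.fract_nonneg _)]; exact (Int.fract_lt_one _).le) hε0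
  have h : Tendsto (fun i => t - Int.fract (t / ε i) * ε i) l (𝓝 t) := by
    simpa using hfract.const_sub t
  refine h.congr' ((hε.eventually self_mem_nhdsWithin).mono fun i hi => ?_)
  simp only [← Int.self_sub_fract, sub_mul, div_mul_cancel₀ t hi]

section ClosedSubgroup

variable (G : ClosedSubgroup 𝔸ˣ)

theorem expUnit_smul_mem_of_tendsto {ι : Type*} {l : Filter ι} [l.NeBot] {g : ι → 𝔸ˣ} {ε : ι → ℝ}
    {X : 𝔸} (hε : Tendsto ε l (𝓝[≠] 0))
    (hg : Tendsto (fun i => (ε i)⁻¹ • ((g i : 𝔸) - 1)) l (𝓝 X)) (hgG : ∀ᶠ i in l, g i ∈ G)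
    (t : ℝ) : expUnit (t • X) ∈ G :=
  G.isClosed'.mem_of_tendsto (tendsto_zpow_expUnit hε hg (tendsto_floor_div_mul_self hε t))
    (hgG.mono fun _ hi => zpow_mem hi _)

theorem expUnit_smul_mem_of_hasDerivAt {γ : ℝ → 𝔸ˣ} {X : 𝔸} (hγG : ∀ t, γ t ∈ G) (hγ0 : γ 0 = 1)
    (hγ : HasDerivAt (fun t => (γ t : 𝔸)) X 0) (t : ℝ) : expUnit (t • X) ∈ G := by
  refine expUnit_smul_mem_of_tendsto G (l := 𝓝[≠] 0) (g := γ) tendsto_id ?_ (.of_forall hγG) t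
  simpa [hγ0] using hasDerivAt_iff_tendsto_slope_zero.1 hγ

/-- The tangent space at `1` of a closed subgroup `G` of the units of a Banach algebra, encoded as
the set of velocities of the one-parameter groups `t ↦ exp (t X)` contained in `G`. -/
def tangentSpace : Submodule ℝ 𝔸 where
  carrier := {X | ∀ t : ℝ, expUnit (t • X) ∈ G}
  zero_mem' t := by
    rw [smul_zero, expUnit_zero]
    exact one_mem G
  add_mem' {X Y} hX hY := by
    refine expUnit_smul_mem_of_hasDerivAt G (γ := fun t => expUnit (t • X) * expUnit (t • Y))
      (fun t => mul_mem (hX t) (hY t)) (by simp [expUnit_zero]) ?_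
    simpa using (hasDerivAt_exp_smul_zero X).fun_mul (hasDerivAt_exp_smul_zero Y)
  smul_mem' c X hX t := by
    rw [smul_smul]
    exact hX _

variable {G}

theorem mem_tangentSpace {X : 𝔸} : X ∈ tangentSpace G ↔ ∀ t : ℝ, expUnit (t • X) ∈ G :=
  Iff.rfl

theorem expUnit_mem {X : 𝔸} (hX : X ∈ tangentSpace G) : expUnit X ∈ G := by
  simpa using hX 1

theorem isClosed_tangentSpace : IsClosed (tangentSpace G : Set 𝔸) := by
  have h : (tangentSpace G : Set 𝔸) = ⋂ t : ℝ, {X | expUnit (t • X) ∈ G} := by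
    ext X
    simp [mem_tangentSpace]
  rw [h]
  exact isClosed_iInter fun t =>
    G.isClosed'.preimage (continuous_expUnit.comp (continuous_const_smul t))

theorem conj_mem_tangentSpace {g : 𝔸ˣ} (hg : g ∈ G) {X : 𝔸} (hX : X ∈ tangentSpace G) :
    g * X * ↑g⁻¹ ∈ tangentSpace G := fun t => by
  rw [← smul_mul_assoc, ← mul_smul_comm, expUnit_conj]
  exact mul_mem (mul_mem hg (hX t)) (inv_mem hg)

/-- The bracket is the derivative at `0` of the curve `t ↦ exp (t X) Y exp (-t X)` in the closed
subspace `tangentSpace G`. -/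
theorem lie_mem_tangentSpace {X Y : 𝔸} (hX : X ∈ tangentSpace G) (hY : Y ∈ tangentSpace G) :
    ⁅X, Y⁆ ∈ tangentSpace G := by
  let γ : ℝ → 𝔸 := fun t => exp (t • X) * Y * exp (t • -X)
  have hγ : HasDerivAt γ ⁅X, Y⁆ 0 := by
    simpa [γ, Ring.lie_def, sub_eq_add_neg] using
      ((hasDerivAt_exp_smul_zero X).mul_const Y).fun_mul (hasDerivAt_exp_smul_zero (-X))
  have hγmem (t : ℝ) : γ t ∈ tangentSpace G := by
    simpa [γ, ← expUnit_neg] using conj_mem_tangentSpace (hX t) hY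
  refine isClosed_tangentSpace.mem_of_tendsto (hasDerivAt_iff_tendsto_slope_zero.1 hγ)
    (.of_forall fun t => ?_)
  exact Submodule.smul_mem _ _ (sub_mem (hγmem _) (hγmem _))

end ClosedSubgroup

variable {G : ClosedSubgroup 𝔸ˣ}

theorem contDiff_exp_real : ContDiff ℝ 1 (exp : 𝔸 → 𝔸) :=
  contDiff_iff_contDiffAt.2 fun X => (exp_analytic (𝕂 := ℝ) X).contDiffAt

/-- Otherwise the directions `‖Y‖⁻¹ Y` of points `1 + Y` of `G` accumulate at a unit vector of `𝔪`,
which is tangent to `G`. -/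
theorem eventually_eq_zero_of_one_add_mem {𝔪 : Submodule ℝ 𝔸} [FiniteDimensional ℝ 𝔪]
    (h𝔪 : Disjoint (tangentSpace G) 𝔪) :
    ∀ᶠ Y : 𝔪 in 𝓝 0, ∀ g ∈ G, (g : 𝔸) = 1 + Y → Y = 0 := by
  by_contra hfreq
  let bad : Set 𝔪 := {Y | ∃ g ∈ G, (g : 𝔸) = 1 + Y ∧ Y ≠ 0}
  have : NeBot (𝓝 (0 : 𝔪) ⊓ 𝓟 bad) := by
    refine frequently_mem_iff_neBot.1 ((not_eventually.1 hfreq).mono fun Y hY => ?_)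
    simpa only [bad, Set.mem_ofPred_eq, not_forall, exists_prop] using hY
  let U : Ultrafilter 𝔪 := .of (𝓝 0 ⊓ 𝓟 bad)
  have hU : (U : Filter 𝔪) ≤ 𝓝 0 ⊓ 𝓟 bad := Ultrafilter.of_le _
  have hUbad : ∀ᶠ Y in (U : Filter 𝔪), Y ∈ bad := hU.trans inf_le_right (mem_principal_self _)
  choose! g hgG hg hne using fun Y (hY : Y ∈ bad) => hY
  have hsphere : ∀ᶠ Y in (U : Filter 𝔪), ‖Y‖⁻¹ • Y ∈ Metric.sphere (0 : 𝔪) 1 :=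
    hUbad.mono fun Y hY => by simpa using norm_smul_inv_norm (𝕜 := ℝ) (hne Y hY)
  obtain ⟨Z, hZ, hUZ⟩ := (isCompact_sphere (0 : 𝔪) 1).ultrafilter_le_nhds
    (U.map fun Y => ‖Y‖⁻¹ • Y) (le_principal_iff.2 hsphere)
  have hnorm : Tendsto (fun Y : 𝔪 => ‖Y‖) U (𝓝[≠] 0) := by
    refine tendsto_nhdsWithin_iff.2 ⟨?_, hUbad.mono fun Y hY => norm_ne_zero_iff.2 (hne Y hY)⟩
    simpa using (continuous_norm.tendsto (0 : 𝔪)).mono_left (hU.trans inf_le_left)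
  have hdir : Tendsto (fun Y => ‖Y‖⁻¹ • ((g Y : 𝔸) - 1)) U (𝓝 (Z : 𝔸)) :=
    ((continuous_subtype_val.tendsto Z).comp hUZ).congr' <|
      hUbad.mono fun Y hY => by simp [hg Y hY]
  have hZG : (Z : 𝔸) ∈ tangentSpace G :=
    expUnit_smul_mem_of_tendsto G hnorm hdir (hUbad.mono hgG)
  have hZ0 : Z = 0 := Subtype.ext (Submodule.disjoint_def.1 h𝔪 Z hZG Z.2)
  simp [hZ0] at hZ

theorem hasStrictFDerivAt_exp_mul_one_add [FiniteDimensional ℝ 𝔸] {𝔤 𝔪 : Submodule ℝ 𝔸}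
    (h : IsCompl 𝔤 𝔪) :
    HasStrictFDerivAt (fun p : 𝔤 × 𝔪 => exp (p.1 : 𝔸) * (1 + p.2))
      ((𝔤.prodEquivOfIsCompl 𝔪 h).toContinuousLinearEquiv : 𝔤 × 𝔪 →L[ℝ] 𝔸) 0 := by
  have hexp : HasStrictFDerivAt (exp : 𝔸 → 𝔸) (ContinuousLinearMap.id ℝ 𝔸)
      ((𝔤.subtypeL ∘L .fst ℝ 𝔤 𝔪) 0) := by
    simpa [ContinuousLinearMap.one_def] using hasStrictFDerivAt_exp_zero (𝕂 := ℝ) (𝔸 := 𝔸)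
  have hfst := hexp.comp (0 : 𝔤 × 𝔪) (𝔤.subtypeL ∘L .fst ℝ 𝔤 𝔪).hasStrictFDerivAt
  have hsnd := (𝔪.subtypeL ∘L .snd ℝ 𝔤 𝔪).hasStrictFDerivAt (x := 0) |>.const_add 1
  refine (hfst.mul' hsnd).congr_fderiv ?_
  ext <;> simp

theorem eventually_exists_expUnit_eq [FiniteDimensional ℝ 𝔸] :
    ∀ᶠ g : 𝔸ˣ in 𝓝 1, g ∈ G → ∃ X ∈ tangentSpace G, expUnit X = g := by
  obtain ⟨𝔪, h𝔪⟩ := (tangentSpace G).exists_isCompl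
  have hchart := (hasStrictFDerivAt_exp_mul_one_add h𝔪).map_nhds_eq_of_equiv
  have htrans : ∀ᶠ p : tangentSpace G × 𝔪 in 𝓝 0, ∀ g ∈ G, (g : 𝔸) = 1 + p.2 → p.2 = 0 :=
    (continuous_snd.tendsto' (0 : tangentSpace G × 𝔪) 0 rfl).eventually
      (eventually_eq_zero_of_one_add_mem h𝔪.disjoint)
  have himage := image_mem_map (m := fun p : tangentSpace G × 𝔪 => exp (p.1 : 𝔸) * (1 + p.2)) htrans
  rw [hchart] at himage
  simp only [Prod.fst_zero, Prod.snd_zero, ZeroMemClass.coe_zero, exp_zero, add_zero,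
    mul_one] at himage
  filter_upwards [Units.continuous_val.tendsto' (1 : 𝔸ˣ) 1 rfl himage] with g hg hgG
  obtain ⟨⟨X, Y⟩, hXY, hgXY⟩ := hg
  have hY : Y = 0 := by
    refine hXY ((expUnit (X : 𝔸))⁻¹ * g) (mul_mem (inv_mem (expUnit_mem X.2)) hgG) ?_
    rw [Units.val_mul, ← hgXY]
    exact Units.inv_mul_cancel_left (expUnit (X : 𝔸)) _
  exact ⟨X, X.2, Units.ext (by simpa [hY] using hgXY)⟩

theorem le_of_isConnected [FiniteDimensional ℝ 𝔸] {K : Subgroup 𝔸ˣ}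
    (hG : IsConnected (G : Set 𝔸ˣ)) (hK : ∀ X ∈ tangentSpace G, expUnit X ∈ K) :
    G.toSubgroup ≤ K := by
  have : ConnectedSpace G.toSubgroup := isConnected_iff_connectedSpace.1 hG
  have hnhds : ((K.subgroupOf G.toSubgroup : Subgroup G.toSubgroup) : Set G.toSubgroup) ∈ 𝓝 1 := by
    filter_upwards [continuous_subtype_val.tendsto' (1 : G.toSubgroup) 1 rfl
      eventually_exists_expUnit_eq] with g hg
    obtain ⟨X, hX, hXg⟩ := hg g.2
    simpa [Subgroup.mem_subgroupOf, ← hXg] using hK X hX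
  have hopen := Subgroup.isOpen_of_mem_nhds _ hnhds
  have hclopen : IsClopen _ := ⟨Subgroup.isClosed_of_isOpen _ hopen, hopen⟩
  have huniv := hclopen.eq_univ ⟨1, one_mem _⟩
  exact Subgroup.subgroupOf_eq_top.1 (SetLike.coe_injective huniv)

theorem finrank_le_dimH_range_of_hasStrictFDerivAt {E F : Type*} [NormedAddCommGroup E]
    [NormedSpace ℝ E] [FiniteDimensional ℝ E] [NormedAddCommGroup F] [NormedSpace ℝ F]
    [FiniteDimensional ℝ F] {f : E → F} {f' : E →L[ℝ] F} {x : E} (hf : HasStrictFDerivAt f f' x)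
    (hf' : Function.Injective f') : (Module.finrank ℝ E : ENNReal) ≤ dimH (Set.range f) := by
  obtain ⟨L, hL⟩ := ContinuousLinearMap.HasLeftInverse.of_injective_of_finiteDimensional hf'
  have hLf : HasStrictFDerivAt (L ∘ f) (ContinuousLinearEquiv.refl ℝ E : E →L[ℝ] E) x :=
    (L.hasStrictFDerivAt.comp x hf).congr_fderiv (ContinuousLinearMap.ext hL)
  have hnhds : Set.range (L ∘ f) ∈ 𝓝 (L (f x)) := by
    rw [← Function.comp_apply (f := L), ← hLf.map_nhds_eq_of_equiv]
    exact range_mem_map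
  rw [← Real.dimH_of_mem_nhds hnhds, Set.range_comp]
  exact L.lipschitz.dimH_image_le _

theorem finrank_tangentSpace_le_dimH [FiniteDimensional ℝ 𝔸] :
    (Module.finrank ℝ (tangentSpace G) : ENNReal) ≤ dimH (Units.val '' (G : Set 𝔸ˣ)) := by
  have hexp : HasStrictFDerivAt (exp : 𝔸 → 𝔸) (ContinuousLinearMap.id ℝ 𝔸)
      ((tangentSpace G).subtypeL 0) := by
    simpa [ContinuousLinearMap.one_def] using hasStrictFDerivAt_exp_zero (𝕂 := ℝ) (𝔸 := 𝔸)
  refine (finrank_le_dimH_range_of_hasStrictFDerivAt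
    (hexp.comp 0 (tangentSpace G).subtypeL.hasStrictFDerivAt)
    (tangentSpace G).injective_subtype).trans (dimH_mono ?_)
  rintro _ ⟨X, rfl⟩
  exact ⟨expUnit X, expUnit_mem X.2, rfl⟩

theorem dimH_le_finrank_tangentSpace [FiniteDimensional ℝ 𝔸] :
    dimH (Units.val '' (G : Set 𝔸ˣ)) ≤ Module.finrank ℝ (tangentSpace G) := by
  by_contra! hlt
  obtain ⟨_, ⟨g, hg, rfl⟩, hdim⟩ := exists_mem_nhdsWithin_lt_dimH_of_lt_dimH hlt
  have hnear : ∀ᶠ a in 𝓝[Units.val '' (G : Set 𝔸ˣ)] (g : 𝔸),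
      ∃ X ∈ tangentSpace G, g * exp X = a := by
    have hg1 : Tendsto (g⁻¹ * ·) (𝓝 g) (𝓝 1) := (continuous_const_mul g⁻¹).tendsto' g 1 (by simp)
    rw [← Units.isOpenEmbedding_val.isEmbedding.map_nhdsWithin_eq, eventually_map]
    filter_upwards [self_mem_nhdsWithin,
      nhdsWithin_le_nhds (hg1 eventually_exists_expUnit_eq)] with u hu hexp
    obtain ⟨X, hX, hXu⟩ := hexp (mul_mem (inv_mem hg) hu)
    exact ⟨X, hX, by rw [← val_expUnit, hXu, ← Units.val_mul, mul_inv_cancel_left]⟩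
  have hsmooth : ContDiff ℝ 1 fun X : tangentSpace G => (g : 𝔸) * exp (X : 𝔸) :=
    contDiff_const.mul (contDiff_exp_real.comp (tangentSpace G).subtypeL.contDiff)
  refine (hdim _ hnear).not_ge ((dimH_mono ?_).trans hsmooth.dimH_range_le)
  rintro a ⟨X, hX, rfl⟩
  exact ⟨⟨X, hX⟩, rfl⟩

theorem dimH_image_val_eq_finrank_tangentSpace [FiniteDimensional ℝ 𝔸] :
    dimH (Units.val '' (G : Set 𝔸ˣ)) = Module.finrank ℝ (tangentSpace G) :=
  dimH_le_finrank_tangentSpace.antisymm finrank_tangentSpace_le_dimH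

theorem commute_of_isConnected [FiniteDimensional ℝ 𝔸] (hG : IsConnected (G : Set 𝔸ˣ)) {r : 𝔸}
    (hr : ∀ X ∈ tangentSpace G, Commute X r) {g : 𝔸ˣ} (hg : g ∈ G) : Commute (g : 𝔸) r := by
  have hexp : ∀ X ∈ tangentSpace G, exp X ∈ Submonoid.centralizer {r} := fun X hX =>
    Submonoid.mem_centralizer_iff.2 fun _ hs => hs ▸ (hr X hX).exp_left.symm
  have hle : G.toSubgroup ≤ (Submonoid.centralizer {r}).units := le_of_isConnected hG fun X hX =>
    (Submonoid.mem_units_iff _ _).2 ⟨hexp X hX, hexp _ (neg_mem hX)⟩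
  have hmem := ((Submonoid.mem_units_iff _ _).1 (hle hg)).1
  exact (Submonoid.mem_centralizer_iff.1 hmem r rfl).symm

end BanachAlgebra

section Unitary

open NormedSpace

theorem isClosed_map_toUnits {R : Type*} [Monoid R] [StarMul R] [TopologicalSpace R] [T1Space R]
    [ContinuousStar R] [ContinuousMul R] {H : Subgroup (unitary R)}
    (hH : IsClosed (H : Set (unitary R))) : IsClosed (H.map Unitary.toUnits : Set Rˣ) := by
  have hval : IsClosed (Subtype.val '' (H : Set (unitary R))) :=
    isClosed_unitary.isClosedEmbedding_subtypeVal.isClosedMap _ hH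
  convert hval.preimage Units.continuous_val
  ext g
  simp [Units.ext_iff]

theorem continuous_toUnits {R : Type*} [Monoid R] [StarMul R] [TopologicalSpace R]
    [ContinuousStar R] : Continuous (Unitary.toUnits : unitary R →* Rˣ) :=
  Units.continuous_iff.2 ⟨continuous_subtype_val, continuous_star.comp continuous_subtype_val⟩

variable {𝔸 : Type*} [NormedRing 𝔸] [StarRing 𝔸] [ContinuousStar 𝔸]

/-- A closed group of unitary elements, viewed as a closed subgroup of the units. -/
def closedSubgroupUnits (H : Subgroup (unitary 𝔸)) (hH : IsClosed (H : Set (unitary 𝔸))) :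
    ClosedSubgroup 𝔸ˣ where
  toSubgroup := H.map Unitary.toUnits
  isClosed' := isClosed_map_toUnits hH

variable {H : Subgroup (unitary 𝔸)} {hH : IsClosed (H : Set (unitary 𝔸))}

theorem mem_closedSubgroupUnits {g : 𝔸ˣ} :
    g ∈ closedSubgroupUnits H hH ↔ ∃ u ∈ H, (u : 𝔸) = g :=
  exists_congr fun _ => and_congr_right fun _ => Units.ext_iff

theorem image_val_closedSubgroupUnits :
    Units.val '' (closedSubgroupUnits H hH : Set 𝔸ˣ) = Subtype.val '' (H : Set (unitary 𝔸)) :=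
  Set.image_image _ _ _

theorem isConnected_closedSubgroupUnits (hconn : IsConnected (H : Set (unitary 𝔸))) :
    IsConnected (closedSubgroupUnits H hH : Set 𝔸ˣ) :=
  hconn.image _ continuous_toUnits.continuousOn

variable [NormedAlgebra ℝ 𝔸] [CompleteSpace 𝔸]

theorem star_eq_neg_of_mem_tangentSpace [StarModule ℝ 𝔸] {X : 𝔸}
    (hX : X ∈ tangentSpace (closedSubgroupUnits H hH)) : star X = -X := by
  have hconst : (fun t : ℝ => exp (t • star X) * exp (t • X)) = fun _ => 1 := by
    funext t
    obtain ⟨u, -, hu⟩ := mem_closedSubgroupUnits.1 (hX t)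
    rw [show t • star X = star (t • X) by simp, ← star_exp, ← val_expUnit, ← hu]
    exact Unitary.coe_star_mul_self u
  have hderiv := (hasDerivAt_exp_smul_zero (star X)).fun_mul (hasDerivAt_exp_smul_zero X)
  rw [hconst] at hderiv
  have hsum : star X + X = 0 := by simpa using hderiv.unique (hasDerivAt_const (0 : ℝ) (1 : 𝔸))
  exact eq_neg_of_add_eq_zero_left hsum

theorem exists_mem_eq_exp {X : 𝔸}
    (hX : X ∈ tangentSpace (closedSubgroupUnits H hH)) : ∃ u ∈ H, (u : 𝔸) = exp X :=
  mem_closedSubgroupUnits.1 (expUnit_mem hX)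

end Unitary

/-! ### Subalgebras of `so(3) × so(3)` -/

section LinearAlgebra

open Module

theorem finrank_map_add_finrank_comap_of_exact {K E E' F : Type*} [Field K] [AddCommGroup E]
    [Module K E] [FiniteDimensional K E] [AddCommGroup E'] [Module K E'] [AddCommGroup F]
    [Module K F] {i : E' →ₗ[K] E} {f : E →ₗ[K] F} (hi : Function.Injective i)
    (hif : Function.Exact i f) (W : Submodule K E) :
    finrank K (W.map f) + finrank K (W.comap i) = finrank K W := by
  have hker : (W.comap i).map i = (LinearMap.ker (f.domRestrict W)).map W.subtype := by
    rw [LinearMap.ker_domRestrict, Submodule.map_comap_eq, Submodule.map_comap_eq,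
      Submodule.range_subtype, ← LinearMap.exact_iff.1 hif, inf_comm]
  rw [← LinearMap.finrank_range_add_finrank_ker (f.domRestrict W), LinearMap.range_domRestrict,
    (Submodule.equivMapOfInjective i hi _).finrank_eq, hker, Submodule.finrank_map_subtype_eq]

theorem finrank_submodule_prod {K E F : Type*} [Field K] [AddCommGroup E] [Module K E]
    [FiniteDimensional K E] [AddCommGroup F] [Module K F] [FiniteDimensional K F]
    (V : Submodule K E) (U : Submodule K F) :
    finrank K (V.prod U) = finrank K V + finrank K U := by
  rw [← finrank_map_add_finrank_comap_of_exact LinearMap.inr_injective .inr_fst (V.prod U),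
    Submodule.prod_map_fst, Submodule.prod_comap_inr]

end LinearAlgebra

section FourDimensional

open Module Matrix Quaternion NormedSpace Unitary

local notation "ℝ³" => Fin 3 → ℝ

local notation "M₄" => Matrix (Fin 4) (Fin 4) ℝ

theorem exists_dotProduct_self_eq_one_and_span_eq {n : Type*} [Fintype n] {v : n → ℝ} (hv : v ≠ 0) :
    ∃ w, w ⬝ᵥ w = 1 ∧ Submodule.span ℝ {w} = Submodule.span ℝ {v} := by
  have hpos : 0 < v ⬝ᵥ v := (Finset.sum_nonneg fun i _ => mul_self_nonneg (v i)).lt_of_ne'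
    (dotProduct_self_eq_zero.not.2 hv)
  have hc : (√(v ⬝ᵥ v))⁻¹ ≠ 0 := inv_ne_zero (Real.sqrt_pos.2 hpos).ne'
  refine ⟨(√(v ⬝ᵥ v))⁻¹ • v, ?_, Submodule.span_singleton_smul_eq (IsUnit.mk0 _ hc) v⟩
  rw [smul_dotProduct, dotProduct_smul, smul_smul, ← mul_inv, Real.mul_self_sqrt hpos.le,
    smul_eq_mul, inv_mul_cancel₀ hpos.ne']

theorem mem_span_singleton_iff_cross_eq_zero {v w : ℝ³} (hw : w ⬝ᵥ w = 1) :
    v ∈ Submodule.span ℝ {w} ↔ v ⨯₃ w = 0 := by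
  rw [Submodule.mem_span_singleton]
  constructor
  · rintro ⟨c, rfl⟩
    rw [map_smul, LinearMap.smul_apply, cross_self, smul_zero]
  · intro h
    have htriple := cross_cross_eq_smul_sub_smul' w v w
    rw [h, map_zero, hw, one_smul] at htriple
    exact ⟨v ⬝ᵥ w, (sub_eq_zero.1 htriple.symm).symm⟩

theorem eq_top_of_cross_cross_mem {V : Submodule ℝ ℝ³} {v : ℝ³} (hv0 : v ≠ 0) (hv : v ∈ V)
    (hcross : ∀ z, v ⨯₃ (z ⨯₃ v) ∈ V) : V = ⊤ := by
  refine eq_top_iff.2 fun z _ => ?_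
  have hmem : (v ⬝ᵥ v) • z ∈ V := by
    rw [← sub_add_cancel ((v ⬝ᵥ v) • z), ← cross_cross_eq_smul_sub_smul' v z v]
    exact add_mem (hcross z) (V.smul_mem _ hv)
  exact (V.smul_mem_iff (dotProduct_self_eq_zero.not.2 hv0)).1 hmem

theorem eq_top_of_cross_mem {V : Submodule ℝ ℝ³} (hV : V ≠ ⊥)
    (hcross : ∀ u, ∀ v ∈ V, u ⨯₃ v ∈ V) : V = ⊤ := by
  obtain ⟨v, hv, hv0⟩ := V.ne_bot_iff.1 hV
  exact eq_top_of_cross_cross_mem hv0 hv fun z => hcross v _ (hcross z v hv)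

/-- With `x, y ∈ V` independent and `n = x × y`, every `z × n` is a combination of `x` and `y`. -/
theorem eq_top_of_two_le_finrank {V : Submodule ℝ ℝ³} (hV : ∀ u ∈ V, ∀ v ∈ V, u ⨯₃ v ∈ V)
    (h2 : 2 ≤ finrank ℝ V) : V = ⊤ := by
  have : Nontrivial V := Module.nontrivial_of_finrank_pos (R := ℝ) (by omega)
  obtain ⟨x, hx0⟩ := exists_ne (0 : V)
  obtain ⟨y, hxy⟩ := exists_linearIndependent_pair_of_one_lt_finrank h2 hx0
  have hn0 : (x : ℝ³) ⨯₃ y ≠ 0 := by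
    have hxy' := hxy.map' V.subtype V.ker_subtype
    rw [← FinVec.map_eq] at hxy'
    exact crossProduct_ne_zero_iff_linearIndependent.2 hxy'
  have hn : (x : ℝ³) ⨯₃ y ∈ V := hV x x.2 y y.2
  refine eq_top_of_cross_cross_mem hn0 hn fun z => hV _ hn _ ?_
  rw [cross_cross_eq_smul_sub_smul']
  exact sub_mem (V.smul_mem _ x.2) (V.smul_mem _ y.2)

theorem eq_top_or_eq_span_singleton {V : Submodule ℝ ℝ³} (hV : ∀ u ∈ V, ∀ v ∈ V, u ⨯₃ v ∈ V)
    (hbot : V ≠ ⊥) : V = ⊤ ∨ ∃ w, w ⬝ᵥ w = 1 ∧ V = Submodule.span ℝ {w} := by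
  rcases le_or_gt 2 (finrank ℝ V) with h2 | h1
  · exact .inl (eq_top_of_two_le_finrank hV h2)
  · obtain ⟨v, rfl⟩ := ((Submodule.finrank_le_one_iff_isPrincipal V).1 (by omega)).principal
    obtain ⟨w, hw, hspan⟩ := exists_dotProduct_self_eq_one_and_span_eq
      (Submodule.span_singleton_eq_bot.not.1 hbot)
    exact .inr ⟨w, hw, hspan.symm⟩

/-- A subspace of `ℝ³ × ℝ³` closed under the componentwise cross product, that is, a Lie subalgebra
of `so(3) × so(3)`. -/
def IsCrossClosed (W : Submodule ℝ (ℝ³ × ℝ³)) : Prop :=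
  ∀ p ∈ W, ∀ q ∈ W, (p.1 ⨯₃ q.1, p.2 ⨯₃ q.2) ∈ W

section IsCrossClosed

variable {W : Submodule ℝ (ℝ³ × ℝ³)}

open LinearMap (fst snd inl inr)

theorem finrank_map_fst_add_finrank_comap_inr :
    finrank ℝ (W.map (fst ℝ ℝ³ ℝ³)) + finrank ℝ (W.comap (inr ℝ ℝ³ ℝ³)) = finrank ℝ W :=
  finrank_map_add_finrank_comap_of_exact LinearMap.inr_injective .inr_fst W

theorem finrank_map_snd_add_finrank_comap_inl :
    finrank ℝ (W.map (snd ℝ ℝ³ ℝ³)) + finrank ℝ (W.comap (inl ℝ ℝ³ ℝ³)) = finrank ℝ W :=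
  finrank_map_add_finrank_comap_of_exact LinearMap.inl_injective .inl_snd W

theorem finrank_submodule_le_three (V : Submodule ℝ ℝ³) : finrank ℝ V ≤ 3 := by
  simpa using V.finrank_le

theorem IsCrossClosed.comap_inl (hW : IsCrossClosed W) :
    ∀ u ∈ W.comap (inl ℝ ℝ³ ℝ³), ∀ v ∈ W.comap (inl ℝ ℝ³ ℝ³), u ⨯₃ v ∈ W.comap (inl ℝ ℝ³ ℝ³) :=
  fun u hu v hv => by simpa using hW _ hu _ hv

theorem IsCrossClosed.comap_inr (hW : IsCrossClosed W) :
    ∀ u ∈ W.comap (inr ℝ ℝ³ ℝ³), ∀ v ∈ W.comap (inr ℝ ℝ³ ℝ³), u ⨯₃ v ∈ W.comap (inr ℝ ℝ³ ℝ³) :=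
  fun u hu v hv => by simpa using hW _ hu _ hv

theorem IsCrossClosed.map_fst (hW : IsCrossClosed W) :
    ∀ u ∈ W.map (fst ℝ ℝ³ ℝ³), ∀ v ∈ W.map (fst ℝ ℝ³ ℝ³), u ⨯₃ v ∈ W.map (fst ℝ ℝ³ ℝ³) := by
  rintro _ ⟨p, hp, rfl⟩ _ ⟨q, hq, rfl⟩
  exact ⟨_, hW p hp q hq, rfl⟩

theorem comap_inl_ne_bot (h4 : 4 ≤ finrank ℝ W) : W.comap (inl ℝ ℝ³ ℝ³) ≠ ⊥ := by
  have := finrank_map_snd_add_finrank_comap_inl (W := W)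
  have := finrank_submodule_le_three (W.map (snd ℝ ℝ³ ℝ³))
  exact Submodule.one_le_finrank_iff.1 (by omega)

theorem comap_inr_ne_bot (h4 : 4 ≤ finrank ℝ W) : W.comap (inr ℝ ℝ³ ℝ³) ≠ ⊥ := by
  have := finrank_map_fst_add_finrank_comap_inr (W := W)
  have := finrank_submodule_le_three (W.map (fst ℝ ℝ³ ℝ³))
  exact Submodule.one_le_finrank_iff.1 (by omega)

theorem IsCrossClosed.comap_inl_eq_top_or_comap_inr_eq_top (hW : IsCrossClosed W)
    (h4 : 4 ≤ finrank ℝ W) : W.comap (inl ℝ ℝ³ ℝ³) = ⊤ ∨ W.comap (inr ℝ ℝ³ ℝ³) = ⊤ := by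
  rcases le_or_gt 2 (finrank ℝ (W.map (fst ℝ ℝ³ ℝ³))) with h2 | h1
  · refine .inl (eq_top_of_cross_mem (comap_inl_ne_bot h4) fun u v hv => ?_)
    obtain ⟨p, hp, rfl⟩ : u ∈ W.map (fst ℝ ℝ³ ℝ³) := by
      rw [eq_top_of_two_le_finrank hW.map_fst h2]
      trivial
    simpa using hW p hp _ hv
  · refine .inr (Submodule.eq_top_of_finrank_eq ?_)
    have := finrank_map_fst_add_finrank_comap_inr (W := W)
    have := finrank_submodule_le_three (W.comap (inr ℝ ℝ³ ℝ³))
    rw [finrank_fin_fun]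
    omega

theorem eq_comap_inl_prod_top (h : W.comap (inr ℝ ℝ³ ℝ³) = ⊤) :
    W = (W.comap (inl ℝ ℝ³ ℝ³)).prod ⊤ := by
  ext ⟨u, v⟩
  have hv : (0, v) ∈ W := (Submodule.eq_top_iff'.1 h) v
  simpa using (W.add_mem_iff_left (x := (u, 0)) hv)

theorem eq_top_prod_comap_inr (h : W.comap (inl ℝ ℝ³ ℝ³) = ⊤) :
    W = Submodule.prod ⊤ (W.comap (inr ℝ ℝ³ ℝ³)) := by
  ext ⟨u, v⟩
  have hu : (u, 0) ∈ W := (Submodule.eq_top_iff'.1 h) u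
  simpa using (W.add_mem_iff_right (y := (0, v)) hu)

theorem IsCrossClosed.eq_top_or_eq_prod (hW : IsCrossClosed W) (h4 : 4 ≤ finrank ℝ W) :
    W = ⊤ ∨ ∃ w, w ⬝ᵥ w = 1 ∧
      (W = (Submodule.span ℝ {w}).prod ⊤ ∨ W = Submodule.prod ⊤ (Submodule.span ℝ {w})) := by
  rcases hW.comap_inl_eq_top_or_comap_inr_eq_top h4 with h | h
  · rw [eq_top_prod_comap_inr h]
    rcases eq_top_or_eq_span_singleton hW.comap_inr (comap_inr_ne_bot h4) with h' | ⟨w, hw, h'⟩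
    · exact .inl (by rw [h', Submodule.prod_top])
    · exact .inr ⟨w, hw, .inr (by rw [h'])⟩
  · rw [eq_comap_inl_prod_top h]
    rcases eq_top_or_eq_span_singleton hW.comap_inl (comap_inl_ne_bot h4) with h' | ⟨w, hw, h'⟩
    · exact .inl (by rw [h', Submodule.prod_top])
    · exact .inr ⟨w, hw, .inl (by rw [h'])⟩

end IsCrossClosed

/-! ### Quaternions and `so(4)` -/

/-- The identification of `ℝ³` with the purely imaginary quaternions. -/
def imQuaternion : ℝ³ →ₗ[ℝ] ℍ[ℝ] where
  toFun u := ⟨0, u 0, u 1, u 2⟩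
  map_add' _ _ := Quaternion.ext _ _ (zero_add 0).symm rfl rfl rfl
  map_smul' _ _ := Quaternion.ext _ _ (smul_zero _).symm rfl rfl rfl

@[simp] theorem re_imQuaternion (u : ℝ³) : (imQuaternion u).re = 0 := rfl

@[simp] theorem imI_imQuaternion (u : ℝ³) : (imQuaternion u).imI = u 0 := rfl

@[simp] theorem imJ_imQuaternion (u : ℝ³) : (imQuaternion u).imJ = u 1 := rfl

@[simp] theorem imK_imQuaternion (u : ℝ³) : (imQuaternion u).imK = u 2 := rfl

theorem star_imQuaternion (u : ℝ³) : star (imQuaternion u) = -imQuaternion u := by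
  ext <;> simp

theorem imQuaternion_mul (u v : ℝ³) :
    imQuaternion u * imQuaternion v = ↑(-(u ⬝ᵥ v)) + imQuaternion (u ⨯₃ v) := by
  ext <;> simp [cross_apply, vec3_dotProduct] <;> ring

theorem imQuaternion_lie (u v : ℝ³) :
    ⁅imQuaternion u, imQuaternion v⁆ = (2 : ℝ) • imQuaternion (u ⨯₃ v) := by
  rw [Ring.lie_def, imQuaternion_mul, imQuaternion_mul, ← cross_anticomm, dotProduct_comm v,
    map_neg, two_smul]
  abel

/-- The basis `1, i, j, k` of the quaternions. -/
noncomputable def quaternionBasis : Basis (Fin 4) ℝ ℍ[ℝ] :=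
  QuaternionAlgebra.basisOneIJK (-1) 0 (-1)

theorem quaternionBasis_repr (q : ℍ[ℝ]) (i : Fin 4) :
    quaternionBasis.repr q i = ![q.re, q.imI, q.imJ, q.imK] i :=
  congrFun (QuaternionAlgebra.coe_basisOneIJK_repr (-1) 0 (-1) q) i

theorem quaternionBasis_apply (i : Fin 4) : quaternionBasis i =
    ![1, imQuaternion ![1, 0, 0], imQuaternion ![0, 1, 0], imQuaternion ![0, 0, 1]] i := by
  fin_cases i <;> refine quaternionBasis.repr.injective (DFunLike.ext _ _ fun j => ?_) <;>
    rw [Basis.repr_self, quaternionBasis_repr] <;> fin_cases j <;> simp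

/-- The matrix of `x ↦ q x` in the basis `1, i, j, k`. -/
noncomputable def leftMulMatrix : ℍ[ℝ] →ₐ[ℝ] M₄ :=
  Algebra.leftMulMatrix quaternionBasis

/-- The matrix of `x ↦ x q̄` in the basis `1, i, j, k`. The conjugation makes it multiplicative
in `q`. -/
noncomputable def rightMulMatrix : ℍ[ℝ] →ₐ[ℝ] M₄ :=
  (LinearMap.toMatrixAlgEquiv quaternionBasis).toAlgHom.comp
    ((Algebra.lsmul ℝ ℝ ℍ[ℝ]).comp (Quaternion.starAe (R := ℝ)).toAlgHom)

theorem leftMulMatrix_eq (q : ℍ[ℝ]) : leftMulMatrix q =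
    !![q.re, -q.imI, -q.imJ, -q.imK; q.imI, q.re, -q.imK, q.imJ;
       q.imJ, q.imK, q.re, -q.imI; q.imK, -q.imJ, q.imI, q.re] := by
  ext i j
  rw [leftMulMatrix, Algebra.leftMulMatrix_eq_repr_mul, quaternionBasis_repr, quaternionBasis_apply]
  fin_cases i <;> fin_cases j <;> simp

theorem rightMulMatrix_eq (q : ℍ[ℝ]) : rightMulMatrix q =
    !![q.re, q.imI, q.imJ, q.imK; -q.imI, q.re, -q.imK, q.imJ;
       -q.imJ, q.imK, q.re, -q.imI; -q.imK, -q.imJ, q.imI, q.re] := by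
  ext i j
  have happly : rightMulMatrix q i j = quaternionBasis.repr (quaternionBasis j * star q) i :=
    LinearMap.toMatrixAlgEquiv_apply ..
  rw [happly, quaternionBasis_repr, quaternionBasis_apply]
  fin_cases i <;> fin_cases j <;> simp

theorem leftMulMatrix_commute_rightMulMatrix (p q : ℍ[ℝ]) :
    Commute (leftMulMatrix p) (rightMulMatrix q) := by
  rw [leftMulMatrix_eq, rightMulMatrix_eq]
  ext i j
  fin_cases i <;> fin_cases j <;> simp [Matrix.mul_apply, Fin.sum_univ_four] <;> ring

theorem star_leftMulMatrix (q : ℍ[ℝ]) : star (leftMulMatrix q) = leftMulMatrix (star q) := by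
  rw [leftMulMatrix_eq, leftMulMatrix_eq]
  ext i j
  fin_cases i <;> fin_cases j <;> simp

theorem star_rightMulMatrix (q : ℍ[ℝ]) : star (rightMulMatrix q) = rightMulMatrix (star q) := by
  rw [rightMulMatrix_eq, rightMulMatrix_eq]
  ext i j
  fin_cases i <;> fin_cases j <;> simp

/-- The isomorphism `so(3) × so(3) ≅ so(4)` sending `(u, v)` to `x ↦ u x - x v`, where `u`, `v` are
imaginary quaternions. -/
noncomputable def so4OfPair : ℝ³ × ℝ³ →ₗ[ℝ] M₄ :=
  (leftMulMatrix.toLinearMap ∘ₗ imQuaternion).coprod (rightMulMatrix.toLinearMap ∘ₗ imQuaternion)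

theorem so4OfPair_apply (p : ℝ³ × ℝ³) :
    so4OfPair p = leftMulMatrix (imQuaternion p.1) + rightMulMatrix (imQuaternion p.2) := rfl

theorem star_so4OfPair (p : ℝ³ × ℝ³) : star (so4OfPair p) = -so4OfPair p := by
  rw [so4OfPair_apply, star_add, star_leftMulMatrix, star_rightMulMatrix, star_imQuaternion,
    star_imQuaternion, map_neg, map_neg, neg_add]

theorem lie_so4OfPair (p q : ℝ³ × ℝ³) :
    ⁅so4OfPair p, so4OfPair q⁆ = (2 : ℝ) • so4OfPair (p.1 ⨯₃ q.1, p.2 ⨯₃ q.2) := by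
  rw [so4OfPair_apply (p.1 ⨯₃ q.1, p.2 ⨯₃ q.2), smul_add, ← map_smul leftMulMatrix,
    ← map_smul rightMulMatrix, ← imQuaternion_lie, ← imQuaternion_lie]
  simp only [so4OfPair_apply, Ring.lie_def, map_sub, map_mul, add_mul, mul_add,
    (leftMulMatrix_commute_rightMulMatrix _ _).eq]
  abel

theorem so4OfPair_eq (p : ℝ³ × ℝ³) : so4OfPair p =
    !![0, p.2 0 - p.1 0, p.2 1 - p.1 1, p.2 2 - p.1 2;
       p.1 0 - p.2 0, 0, -p.1 2 - p.2 2, p.1 1 + p.2 1;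
       p.1 1 - p.2 1, p.1 2 + p.2 2, 0, -p.1 0 - p.2 0;
       p.1 2 - p.2 2, -p.1 1 - p.2 1, p.1 0 + p.2 0, 0] := by
  rw [so4OfPair_apply, leftMulMatrix_eq, rightMulMatrix_eq]
  ext i j
  fin_cases i <;> fin_cases j <;> simp <;> ring

/-- The inverse of `so4OfPair` on skew matrices. -/
noncomputable def pairOfSo4 (X : M₄) : ℝ³ × ℝ³ :=
  (![(X 3 2 + X 1 0) / 2, (X 1 3 + X 2 0) / 2, (X 2 1 + X 3 0) / 2],
   ![(X 3 2 - X 1 0) / 2, (X 1 3 - X 2 0) / 2, (X 2 1 - X 3 0) / 2])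

theorem pairOfSo4_so4OfPair : Function.LeftInverse pairOfSo4 so4OfPair := by
  rintro ⟨u, v⟩
  rw [so4OfPair_eq]
  ext i <;> fin_cases i <;> simp [pairOfSo4]

theorem so4OfPair_pairOfSo4 {X : M₄} (hX : star X = -X) : so4OfPair (pairOfSo4 X) = X := by
  have hskew (i j : Fin 4) : X i j = -X j i := by
    simpa using congrFun₂ hX j i
  have hdiag (i : Fin 4) : X i i = 0 := self_eq_neg.1 (hskew i i)
  rw [so4OfPair_eq]
  ext i j
  fin_cases i <;> fin_cases j <;> simp [pairOfSo4, hdiag] <;>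
    linarith [hskew 0 1, hskew 0 2, hskew 0 3, hskew 1 2, hskew 1 3, hskew 2 3]

theorem so4OfPair_injective : Function.Injective so4OfPair :=
  pairOfSo4_so4OfPair.injective

theorem so4OfPair_inl (u : ℝ³) : so4OfPair (u, 0) = leftMulMatrix (imQuaternion u) := by
  simp [so4OfPair_apply]

theorem so4OfPair_inr (v : ℝ³) : so4OfPair (0, v) = rightMulMatrix (imQuaternion v) := by
  simp [so4OfPair_apply]

theorem commute_so4OfPair_iff {p q : ℝ³ × ℝ³} :
    Commute (so4OfPair p) (so4OfPair q) ↔ p.1 ⨯₃ q.1 = 0 ∧ p.2 ⨯₃ q.2 = 0 := by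
  rw [commute_iff_lie_eq, lie_so4OfPair, smul_eq_zero_iff_right two_ne_zero,
    map_eq_zero_iff _ so4OfPair_injective, Prod.mk_eq_zero]

theorem mem_span_singleton_prod_top_iff {w : ℝ³} (hw : w ⬝ᵥ w = 1) {p : ℝ³ × ℝ³} :
    p ∈ (Submodule.span ℝ {w}).prod ⊤ ↔ Commute (so4OfPair p) (leftMulMatrix (imQuaternion w)) := by
  rw [← so4OfPair_inl, commute_so4OfPair_iff, Submodule.mem_prod,
    mem_span_singleton_iff_cross_eq_zero hw]
  simp

theorem mem_top_prod_span_singleton_iff {w : ℝ³} (hw : w ⬝ᵥ w = 1) {p : ℝ³ × ℝ³} :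
    p ∈ Submodule.prod ⊤ (Submodule.span ℝ {w}) ↔
      Commute (so4OfPair p) (rightMulMatrix (imQuaternion w)) := by
  rw [← so4OfPair_inr, commute_so4OfPair_iff, Submodule.mem_prod,
    mem_span_singleton_iff_cross_eq_zero hw]
  simp

/-- `r` is multiplication by a unit imaginary quaternion, on the left or on the right. These are the
orthogonal complex structures on `ℝ⁴`. -/
def IsImaginaryUnitMul (r : M₄) : Prop :=
  ∃ w, w ⬝ᵥ w = 1 ∧ (r = leftMulMatrix (imQuaternion w) ∨ r = rightMulMatrix (imQuaternion w))

theorem IsCrossClosed.finrank_eq_six_or_exists_mem_iff_commute {W : Submodule ℝ (ℝ³ × ℝ³)}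
    (hW : IsCrossClosed W) (h4 : 4 ≤ finrank ℝ W) :
    finrank ℝ W = 6 ∨ finrank ℝ W = 4 ∧
      ∃ r, IsImaginaryUnitMul r ∧ ∀ p, p ∈ W ↔ Commute (so4OfPair p) r := by
  rcases hW.eq_top_or_eq_prod h4 with rfl | ⟨w, hw, h⟩
  · left
    rw [finrank_top, finrank_prod, finrank_fin_fun]
  · have hspan : finrank ℝ (Submodule.span ℝ {w}) = 1 :=
      finrank_span_singleton fun h0 => by simp [h0] at hw
    right
    rcases h with rfl | rfl
    · exact ⟨by rw [finrank_submodule_prod, hspan, finrank_top, finrank_fin_fun], _,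
        ⟨w, hw, .inl rfl⟩, fun p => mem_span_singleton_prod_top_iff hw⟩
    · exact ⟨by rw [finrank_submodule_prod, hspan, finrank_top, finrank_fin_fun], _,
        ⟨w, hw, .inr rfl⟩, fun p => mem_top_prod_span_singleton_iff hw⟩

theorem finrank_eq_six_or_exists_mem_iff_commute {𝔥 : Submodule ℝ M₄}
    (hskew : ∀ X ∈ 𝔥, star X = -X) (hlie : ∀ X ∈ 𝔥, ∀ Y ∈ 𝔥, ⁅X, Y⁆ ∈ 𝔥) (h4 : 4 ≤ finrank ℝ 𝔥) :
    finrank ℝ 𝔥 = 6 ∨ finrank ℝ 𝔥 = 4 ∧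
      ∃ r, IsImaginaryUnitMul r ∧ ∀ X, X ∈ 𝔥 ↔ star X = -X ∧ Commute X r := by
  have hrank : finrank ℝ (𝔥.comap so4OfPair) = finrank ℝ 𝔥 := by
    rw [(Submodule.equivMapOfInjective _ so4OfPair_injective _).finrank_eq,
      Submodule.map_comap_eq_of_le fun X hX => ⟨_, so4OfPair_pairOfSo4 (hskew X hX)⟩]
  have hcross : IsCrossClosed (𝔥.comap so4OfPair) := fun p hp q hq => by
    have hmem := hlie _ hp _ hq
    rwa [lie_so4OfPair, Submodule.smul_mem_iff _ two_ne_zero] at hmem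
  rw [← hrank] at h4 ⊢
  refine (hcross.finrank_eq_six_or_exists_mem_iff_commute h4).imp_right
    fun ⟨hfour, r, hr, hmem⟩ => ⟨hfour, r, hr, fun X => ?_⟩
  constructor
  · intro hX
    have hpair := so4OfPair_pairOfSo4 (hskew X hX)
    exact ⟨hskew X hX, hpair ▸ (hmem _).1 (by rwa [Submodule.mem_comap, hpair])⟩
  · rintro ⟨hX, hXr⟩
    have hpair := so4OfPair_pairOfSo4 hX
    exact hpair ▸ (hmem (pairOfSo4 X)).2 (by rwa [hpair])

/-! ### The commutant of a complex structure -/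

theorem exists_eq_smul_of_dotProduct_self_eq_one (u : ℝ³) :
    ∃ w, w ⬝ᵥ w = 1 ∧ ∃ s : ℝ, u = s • w := by
  rcases eq_or_ne u 0 with rfl | hu
  · exact ⟨![0, 1, 0], by simp, 0, (zero_smul ..).symm⟩
  · obtain ⟨w, hw, hspan⟩ := exists_dotProduct_self_eq_one_and_span_eq hu
    obtain ⟨s, hs⟩ := Submodule.mem_span_singleton.1 (hspan ▸ Submodule.mem_span_singleton_self u)
    exact ⟨w, hw, s, hs.symm⟩

theorem exists_cos_eq_and_sin_eq {c s : ℝ} (h : c ^ 2 + s ^ 2 = 1) :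
    ∃ θ : ℝ, Real.cos θ = c ∧ Real.sin θ = s := by
  have hnorm : ‖(⟨c, s⟩ : ℂ)‖ = 1 := by
    rw [Complex.norm_eq_sqrt_sq_add_sq, h, Real.sqrt_one]
  have hne : (⟨c, s⟩ : ℂ) ≠ 0 := norm_ne_zero_iff.1 (hnorm ▸ one_ne_zero)
  exact ⟨Complex.arg ⟨c, s⟩, by rw [Complex.cos_arg hne, hnorm, div_one],
    by rw [Complex.sin_arg, hnorm, div_one]⟩

theorem norm_sq_imQuaternion (u : ℝ³) : ‖imQuaternion u‖ ^ 2 = u ⬝ᵥ u := by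
  rw [sq, ← Quaternion.normSq_eq_norm_mul_self, Quaternion.normSq_def', vec3_dotProduct]
  simp only [re_imQuaternion, imI_imQuaternion, imJ_imQuaternion, imK_imQuaternion]
  ring

theorem norm_imQuaternion {w : ℝ³} (hw : w ⬝ᵥ w = 1) : ‖imQuaternion w‖ = 1 := by
  rw [← pow_eq_one_iff_of_nonneg (norm_nonneg _) two_ne_zero, norm_sq_imQuaternion, hw]

theorem imQuaternion_mul_self {w : ℝ³} (hw : w ⬝ᵥ w = 1) :
    imQuaternion w * imQuaternion w = -1 := by
  rw [imQuaternion_mul, hw, cross_self, map_zero, add_zero, Quaternion.coe_neg, Quaternion.coe_one]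

theorem exp_imQuaternion_smul {w : ℝ³} (hw : w ⬝ᵥ w = 1) (θ : ℝ) :
    exp (imQuaternion (θ • w)) = ↑(Real.cos θ) + Real.sin θ • imQuaternion w := by
  rw [Quaternion.exp_of_re_eq_zero _ (re_imQuaternion _), map_smul, norm_smul, norm_imQuaternion hw,
    mul_one, Real.norm_eq_abs, Real.cos_abs, smul_smul]
  congr 2
  rcases abs_choice θ with h | h <;> rw [h]
  · exact div_mul_cancel_of_imp fun h0 => by simp [h0]
  · rw [Real.sin_neg, neg_div_neg_eq]
    exact div_mul_cancel_of_imp fun h0 => by simp [h0]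

theorem exists_exp_imQuaternion_eq {q : ℍ[ℝ]} (hq : ‖q‖ = 1) : ∃ u, exp (imQuaternion u) = q := by
  obtain ⟨w, hw, s, hs⟩ := exists_eq_smul_of_dotProduct_self_eq_one ![q.imI, q.imJ, q.imK]
  have hqw : q = ↑q.re + s • imQuaternion w := by
    rw [← map_smul, ← hs]
    ext <;> simp
  have hunit : q.re ^ 2 + s ^ 2 = 1 := by
    have hs2 : q.imI ^ 2 + q.imJ ^ 2 + q.imK ^ 2 = s ^ 2 := by
      have := congrArg (fun u : ℝ³ => u ⬝ᵥ u) hs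
      simp only [smul_dotProduct, dotProduct_smul, hw, vec3_dotProduct] at this
      simpa [← sq] using this
    rw [← hs2, ← add_assoc, ← add_assoc, ← Quaternion.normSq_def',
      Quaternion.normSq_eq_norm_mul_self, hq, mul_one]
  obtain ⟨θ, hcos, hsin⟩ := exists_cos_eq_and_sin_eq hunit
  exact ⟨θ • w, by rw [exp_imQuaternion_smul hw, hcos, hsin, ← hqw]⟩

theorem exists_eq_smul_of_star_mul_eq {a b : ℍ[ℝ]} (ha : a ≠ 0) (hab : star a * b = star b * a) :
    ∃ t : ℝ, b = t • a := by
  have hreal : star a * b = ↑(star a * b).re :=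
    Quaternion.star_eq_self.1 (by rw [star_mul, star_star, hab])
  refine ⟨(normSq a)⁻¹ * (star a * b).re, ?_⟩
  rw [mul_smul, eq_inv_smul_iff₀ (normSq_ne_zero.2 ha), ← Quaternion.coe_mul_eq_smul,
    ← Quaternion.coe_mul_eq_smul, Quaternion.coe_commutes (star a * b).re, ← hreal, ← mul_assoc,
    Quaternion.self_mul_star]

theorem exists_norm_eq_one_and_eq_smul {a b : ℍ[ℝ]} (hab : star a * b = star b * a)
    (hnorm : ‖a‖ ^ 2 + ‖b‖ ^ 2 = 1) :
    ∃ p : ℍ[ℝ], ‖p‖ = 1 ∧ ∃ c s : ℝ, c ^ 2 + s ^ 2 = 1 ∧ a = c • p ∧ b = s • p := by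
  obtain ⟨p, hp, c, s, rfl, rfl⟩ : ∃ p : ℍ[ℝ], ‖p‖ = 1 ∧ ∃ c s : ℝ, a = c • p ∧ b = s • p := by
    rcases eq_or_ne a 0 with rfl | ha
    · have hb : ‖b‖ ^ 2 = 1 := by simpa using hnorm
      exact ⟨b, (pow_eq_one_iff_of_nonneg (norm_nonneg b) two_ne_zero).1 hb, 0, 1,
        (zero_smul ..).symm, (one_smul ..).symm⟩
    · obtain ⟨t, rfl⟩ := exists_eq_smul_of_star_mul_eq ha hab
      have hnorm_ne := norm_ne_zero_iff.2 ha
      refine ⟨‖a‖⁻¹ • a, norm_smul_inv_norm ha, ‖a‖, t * ‖a‖, ?_, ?_⟩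
      · rw [smul_inv_smul₀ hnorm_ne]
      · rw [mul_smul, smul_inv_smul₀ hnorm_ne]
  refine ⟨p, hp, c, s, ?_, rfl, rfl⟩
  simpa [norm_smul, hp] using hnorm

theorem J4_eq : J4 = !![0, 0, 1, 0; 0, 0, 0, 1; -1, 0, 0, 0; 0, -1, 0, 0] := by
  ext i j
  fin_cases i <;> fin_cases j <;> simp [J4]

theorem rightMulMatrix_j : rightMulMatrix (imQuaternion ![0, 1, 0]) = J4 := by
  rw [J4_eq, rightMulMatrix_eq]
  simp

theorem J4_mul_self : J4 * J4 = -1 := by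
  rw [← rightMulMatrix_j, ← map_mul, imQuaternion_mul_self (by simp), map_neg, map_one]

theorem star_J4 : star J4 = -J4 := by
  rw [← rightMulMatrix_j, star_rightMulMatrix, star_imQuaternion, map_neg]

theorem leftMulMatrix_commute_J4 (q : ℍ[ℝ]) : Commute (leftMulMatrix q) J4 :=
  rightMulMatrix_j ▸ leftMulMatrix_commute_rightMulMatrix ..

theorem leftMulMatrix_add_mul_J4_eq (a b : ℍ[ℝ]) :
    leftMulMatrix a + leftMulMatrix b * J4 =
    !![a.re + b.imJ, -a.imI + b.imK, -a.imJ + b.re, -a.imK - b.imI;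
       a.imI + b.imK, a.re - b.imJ, -a.imK + b.imI, a.imJ + b.re;
       a.imJ - b.re, a.imK + b.imI, a.re + b.imJ, -a.imI + b.imK;
       a.imK - b.imI, -a.imJ - b.re, a.imI + b.imK, a.re - b.imJ] := by
  rw [leftMulMatrix_eq, leftMulMatrix_eq, J4_eq]
  ext i j
  fin_cases i <;> fin_cases j <;> simp <;> ring

theorem exists_eq_leftMulMatrix_add_mul_J4 {A : M₄} (hA : Commute A J4) :
    ∃ a b : ℍ[ℝ], A = leftMulMatrix a + leftMulMatrix b * J4 := by
  have hentry (i j : Fin 4) : (A * J4) i j = (J4 * A) i j := congrFun₂ hA i j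
  simp only [J4_eq, Matrix.mul_apply, Fin.sum_univ_four] at hentry
  have h02 : -A 0 2 = A 2 0 := by simpa using hentry 0 0
  have h03 : -A 0 3 = A 2 1 := by simpa using hentry 0 1
  have h12 : -A 1 2 = A 3 0 := by simpa using hentry 1 0
  have h13 : -A 1 3 = A 3 1 := by simpa using hentry 1 1
  have h22 : A 0 0 = A 2 2 := by simpa using hentry 0 2
  have h23 : A 0 1 = A 2 3 := by simpa using hentry 0 3
  have h32 : A 1 0 = A 3 2 := by simpa using hentry 1 2
  have h33 : A 1 1 = A 3 3 := by simpa using hentry 1 3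
  refine ⟨⟨(A 0 0 + A 1 1) / 2, (A 1 0 - A 0 1) / 2, (A 2 0 - A 3 1) / 2, (A 3 0 + A 2 1) / 2⟩,
    ⟨-(A 2 0 + A 3 1) / 2, (A 2 1 - A 3 0) / 2, (A 0 0 - A 1 1) / 2, (A 1 0 + A 0 1) / 2⟩,
    .trans ?_ (leftMulMatrix_add_mul_J4_eq _ _).symm⟩
  ext i j
  fin_cases i <;> fin_cases j <;> simp <;> linarith

theorem leftMulMatrix_add_mul_J4_eq_one_iff {a b : ℍ[ℝ]} :
    leftMulMatrix a + leftMulMatrix b * J4 = 1 ↔ a = 1 ∧ b = 0 := by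
  refine ⟨fun h => ?_, fun ⟨ha, hb⟩ => by simp [ha, hb]⟩
  have hentry (i j : Fin 4) := congrFun₂ h i j
  simp only [leftMulMatrix_add_mul_J4_eq] at hentry
  have h00 : a.re + b.imJ = 1 := hentry 0 0
  have h11 : a.re - b.imJ = 1 := hentry 1 1
  have h01 : -a.imI + b.imK = 0 := hentry 0 1
  have h10 : a.imI + b.imK = 0 := hentry 1 0
  have h20 : a.imJ - b.re = 0 := hentry 2 0
  have h31 : -a.imJ - b.re = 0 := hentry 3 1
  have h30 : a.imK - b.imI = 0 := hentry 3 0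
  have h21 : a.imK + b.imI = 0 := hentry 2 1
  constructor <;> ext <;> simp <;> linarith

theorem exists_eq_leftMulMatrix_mul_rightMulMatrix_exp {A : M₄} (hA : star A * A = 1)
    (hAJ : Commute A J4) : ∃ p : ℍ[ℝ], ‖p‖ = 1 ∧ ∃ θ : ℝ,
      A = leftMulMatrix p * rightMulMatrix (exp (imQuaternion (θ • ![0, 1, 0]))) := by
  obtain ⟨a, b, rfl⟩ := exists_eq_leftMulMatrix_add_mul_J4 hAJ
  have hprod : leftMulMatrix (star a * a + star b * b) +
      leftMulMatrix (star a * b - star b * a) * J4 = 1 := by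
    rw [← hA, star_add, star_mul, star_J4, star_leftMulMatrix, star_leftMulMatrix, neg_mul,
      ← (leftMulMatrix_commute_J4 _).eq, add_mul, mul_add, mul_add, neg_mul, neg_mul,
      (leftMulMatrix_commute_J4 a).symm.right_comm,
      (leftMulMatrix_commute_J4 b).symm.mul_mul_mul_comm, J4_mul_self]
    simp only [map_add, map_sub, map_mul]
    noncomm_ring
  obtain ⟨hunit, hreal⟩ := leftMulMatrix_add_mul_J4_eq_one_iff.1 hprod
  have hnorm : ‖a‖ ^ 2 + ‖b‖ ^ 2 = 1 := by
    rw [Quaternion.star_mul_self, Quaternion.star_mul_self] at hunit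
    rw [sq, sq, ← Quaternion.normSq_eq_norm_mul_self, ← Quaternion.normSq_eq_norm_mul_self]
    exact Quaternion.coe_injective (by simpa using hunit)
  obtain ⟨p, hp, c, s, hcs, rfl, rfl⟩ := exists_norm_eq_one_and_eq_smul (sub_eq_zero.1 hreal) hnorm
  obtain ⟨θ, rfl, rfl⟩ := exists_cos_eq_and_sin_eq hcs
  refine ⟨p, hp, θ, ?_⟩
  rw [exp_imQuaternion_smul (by simp), map_add, map_smul rightMulMatrix, rightMulMatrix_j,
    ← Quaternion.algebraMap_def, AlgHom.commutes, mul_add, map_smul, map_smul, smul_mul_assoc,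
    mul_smul_comm, ← Algebra.commutes, ← Algebra.smul_def]

/-- The matrix of quaternion conjugation in the basis `1, i, j, k`. -/
def quaternionConjMatrix : M₄ := diagonal ![1, -1, -1, -1]

theorem star_quaternionConjMatrix : star quaternionConjMatrix = quaternionConjMatrix :=
  diagonal_conjTranspose _ |>.trans (congrArg _ (star_trivial _))

theorem quaternionConjMatrix_mul_self : quaternionConjMatrix * quaternionConjMatrix = 1 := by
  rw [quaternionConjMatrix, diagonal_mul_diagonal, ← diagonal_one]
  congr 1
  ext i
  fin_cases i <;> simp

theorem quaternionConjMatrix_mul_leftMulMatrix (q : ℍ[ℝ]) :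
    quaternionConjMatrix * leftMulMatrix q = rightMulMatrix q * quaternionConjMatrix := by
  rw [leftMulMatrix_eq, rightMulMatrix_eq]
  ext i j
  rw [quaternionConjMatrix, diagonal_mul, mul_diagonal]
  fin_cases i <;> fin_cases j <;> simp

theorem exists_norm_eq_one_and_mul_imQuaternion_eq {v w : ℝ³} (hv : v ⬝ᵥ v = 1) (hw : w ⬝ᵥ w = 1) :
    ∃ p : ℍ[ℝ], ‖p‖ = 1 ∧ p * imQuaternion w = imQuaternion v * p := by
  obtain ⟨p, hp, hpw⟩ : ∃ p ≠ 0, p * imQuaternion w = imQuaternion v * p := by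
    by_contra! hnone
    have hzero (x : ℍ[ℝ]) : x * imQuaternion w + imQuaternion v * x = 0 :=
      by_contra fun hx => hnone _ hx <| by
        rw [add_mul, mul_add, mul_assoc x, imQuaternion_mul_self hw, ← mul_assoc _ _ x,
          imQuaternion_mul_self hv, mul_neg_one, neg_one_mul, mul_assoc, add_comm]
    have hwv : imQuaternion w = -imQuaternion v := by
      simpa [eq_neg_iff_add_eq_zero] using hzero 1
    have hcommute (x : ℍ[ℝ]) : x * imQuaternion v = imQuaternion v * x := by
      simpa [hwv, neg_add_eq_zero] using hzero x
    have hj := hcommute (imQuaternion ![0, 1, 0])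
    have hi := hcommute (imQuaternion ![1, 0, 0])
    have h0 : v 0 = 0 := by simpa [neg_eq_self] using congrArg QuaternionAlgebra.imK hj
    have h1 : v 1 = 0 := by simpa [self_eq_neg] using congrArg QuaternionAlgebra.imK hi
    have h2 : v 2 = 0 := by simpa [neg_eq_self] using congrArg QuaternionAlgebra.imJ hi
    simp [vec3_dotProduct, h0, h1, h2] at hv
  exact ⟨‖p‖⁻¹ • p, norm_smul_inv_norm hp, by rw [smul_mul_assoc, hpw, mul_smul_comm]⟩

theorem rightMulMatrix_mem_unitary {p : ℍ[ℝ]} (hp : ‖p‖ = 1) : rightMulMatrix p ∈ unitary M₄ := by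
  have hnorm : normSq p = 1 := by rw [Quaternion.normSq_eq_norm_mul_self, hp, one_mul]
  simp [mem_iff, star_rightMulMatrix, ← map_mul, Quaternion.star_mul_self, Quaternion.self_mul_star,
    hnorm]

theorem quaternionConjMatrix_mem_unitary : quaternionConjMatrix ∈ unitary M₄ := by
  rw [mem_iff, star_quaternionConjMatrix, quaternionConjMatrix_mul_self]
  exact ⟨rfl, rfl⟩

theorem IsImaginaryUnitMul.exists_conjStarAlgAut_eq_J4 {r : M₄} (hr : IsImaginaryUnitMul r) :
    ∃ P : orthogonalGroup (Fin 4) ℝ, conjStarAlgAut ℝ M₄ P r = J4 := by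
  obtain ⟨w, hw, hrw⟩ := hr
  obtain ⟨p, hp, hpw⟩ :=
    exists_norm_eq_one_and_mul_imQuaternion_eq (v := ![0, 1, 0]) (by simp) hw
  let R : unitary M₄ := ⟨rightMulMatrix p, rightMulMatrix_mem_unitary hp⟩
  let K : unitary M₄ := ⟨quaternionConjMatrix, quaternionConjMatrix_mem_unitary⟩
  have hR : conjStarAlgAut ℝ M₄ R (rightMulMatrix (imQuaternion w)) = J4 := by
    change rightMulMatrix p * _ * star (rightMulMatrix p) = J4
    rw [← map_mul, hpw, map_mul, mul_assoc, (mem_iff.1 R.2).2, mul_one, rightMulMatrix_j]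
  have hK : conjStarAlgAut ℝ M₄ K (leftMulMatrix (imQuaternion w)) =
      rightMulMatrix (imQuaternion w) := by
    change quaternionConjMatrix * _ * star quaternionConjMatrix = _
    rw [quaternionConjMatrix_mul_leftMulMatrix, mul_assoc, (mem_iff.1 K.2).2, mul_one]
  rcases hrw with rfl | rfl
  · exact ⟨R * K, by rw [conjStarAlgAut_mul_apply, hK, hR]⟩
  · exact ⟨R, hR⟩

theorem image_conj_eq_u2Set {H : Subgroup (orthogonalGroup (Fin 4) ℝ)}
    {P : orthogonalGroup (Fin 4) ℝ} {r : M₄} (hP : conjStarAlgAut ℝ M₄ P r = J4)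
    (hH : ∀ A, A ∈ H ↔ Commute (A : M₄) r) :
    (fun A => P * A * P⁻¹) '' (H : Set (orthogonalGroup (Fin 4) ℝ)) = u2Set := by
  change MulAut.conj P '' _ = _
  ext B
  obtain ⟨A, rfl⟩ := (MulAut.conj P).surjective B
  have hmap : Commute (conjStarAlgAut ℝ M₄ P A) (conjStarAlgAut ℝ M₄ P r) ↔ Commute (A : M₄) r :=
    commute_map_iff (conjStarAlgAut ℝ M₄ P).injective
  rw [(MulAut.conj P).injective.mem_set_image, SetLike.mem_coe, hH, ← hmap, hP]
  rfl

section

open scoped Matrix.Norms.L2Operator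

theorem exp_so4OfPair (p : ℝ³ × ℝ³) : exp (so4OfPair p) =
    leftMulMatrix (exp (imQuaternion p.1)) * rightMulMatrix (exp (imQuaternion p.2)) := by
  let : NormedAlgebra ℚ ℍ[ℝ] := .restrictScalars ℚ ℝ ℍ[ℝ]
  have hexp_left := map_exp leftMulMatrix leftMulMatrix.toLinearMap.continuous_of_finiteDimensional
  have hexp_right :=
    map_exp rightMulMatrix rightMulMatrix.toLinearMap.continuous_of_finiteDimensional
  rw [so4OfPair_apply, hexp_left, hexp_right]
  exact Matrix.exp_add_of_commute _ _ (leftMulMatrix_commute_rightMulMatrix _ _)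

theorem exists_exp_eq_of_commute_J4 {A : M₄} (hA : star A * A = 1) (hAJ : Commute A J4) :
    ∃ X, star X = -X ∧ Commute X J4 ∧ exp X = A := by
  obtain ⟨p, hp, θ, rfl⟩ := exists_eq_leftMulMatrix_mul_rightMulMatrix_exp hA hAJ
  obtain ⟨u, rfl⟩ := exists_exp_imQuaternion_eq hp
  refine ⟨so4OfPair (u, θ • ![0, 1, 0]), star_so4OfPair _, ?_, exp_so4OfPair _⟩
  rw [← rightMulMatrix_j, ← so4OfPair_inr, commute_so4OfPair_iff]
  exact ⟨by rw [map_zero], by rw [map_smul, LinearMap.smul_apply, cross_self, smul_zero]⟩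

theorem exists_exp_eq_of_commute {P : orthogonalGroup (Fin 4) ℝ} {r A : M₄}
    (hP : conjStarAlgAut ℝ M₄ P r = J4) (hA : star A * A = 1) (hAr : Commute A r) :
    ∃ X, star X = -X ∧ Commute X r ∧ exp X = A := by
  let φ := conjStarAlgAut ℝ M₄ P
  have hφA : star (φ A) * φ A = 1 := by rw [← map_star, ← map_mul, hA, map_one]
  obtain ⟨Y, hY, hYJ, hexp⟩ := exists_exp_eq_of_commute_J4 hφA (hP ▸ hAr.map φ)
  obtain ⟨X, rfl⟩ : ∃ X, φ X = Y := φ.surjective Y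
  have hφexp : φ (exp X) = exp (φ X) := by
    let : NormedAlgebra ℚ M₄ := .restrictScalars ℚ ℝ M₄
    exact map_exp φ (LinearMap.continuous_of_finiteDimensional (φ : M₄ →ₗ[ℝ] M₄)) X
  have hX : φ (star X) = φ (-X) := by rw [map_star, hY, map_neg]
  exact ⟨X, φ.injective hX, .of_map φ.injective (hP ▸ hYJ),
    φ.injective (hφexp.trans hexp)⟩

variable {H : Subgroup (orthogonalGroup (Fin 4) ℝ)}
  (hH : IsClosed (H : Set (orthogonalGroup (Fin 4) ℝ)))

theorem orth4SubgroupDim_eq_finrank :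
    orth4SubgroupDim H = finrank ℝ (tangentSpace (closedSubgroupUnits H hH)) := by
  rw [← dimH_image_val_eq_finrank_tangentSpace, image_val_closedSubgroupUnits,
    ← (Matrix.ofLinearEquiv ℝ).symm.toContinuousLinearEquiv.dimH_image, Set.image_image]
  rfl

theorem orth4SubgroupDim_eq_six_or_exists_mem_tangentSpace_iff (h4 : 4 ≤ orth4SubgroupDim H) :
    orth4SubgroupDim H = 6 ∨ orth4SubgroupDim H = 4 ∧ ∃ r, IsImaginaryUnitMul r ∧
      ∀ X, X ∈ tangentSpace (closedSubgroupUnits H hH) ↔ star X = -X ∧ Commute X r := by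
  rw [orth4SubgroupDim_eq_finrank hH] at h4 ⊢
  exact_mod_cast finrank_eq_six_or_exists_mem_iff_commute
    (fun _ hX => star_eq_neg_of_mem_tangentSpace hX) (fun _ hX _ hY => lie_mem_tangentSpace hX hY)
    (by exact_mod_cast h4)

theorem mem_iff_commute_of_isConnected {P : orthogonalGroup (Fin 4) ℝ} {r : M₄}
    (hconn : IsConnected (H : Set (orthogonalGroup (Fin 4) ℝ)))
    (hr : ∀ X, X ∈ tangentSpace (closedSubgroupUnits H hH) ↔ star X = -X ∧ Commute X r)
    (hP : conjStarAlgAut ℝ M₄ P r = J4) {A : orthogonalGroup (Fin 4) ℝ} :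
    A ∈ H ↔ Commute (A : M₄) r := by
  constructor
  · intro hA
    exact commute_of_isConnected (isConnected_closedSubgroupUnits hconn)
      (fun X hX => ((hr X).1 hX).2) (mem_closedSubgroupUnits.2 ⟨A, hA, rfl⟩ : Unitary.toUnits A ∈ _)
  · intro hA
    obtain ⟨X, hX, hXr, hexp⟩ := exists_exp_eq_of_commute hP (coe_star_mul_self A) hA
    obtain ⟨B, hB, hBX⟩ := exists_mem_eq_exp ((hr X).2 ⟨hX, hXr⟩)
    rwa [Subtype.ext (hBX.trans hexp)] at hB

end

end FourDimensional

theorem stmt_15_general :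
    (∀ H : Subgroup ↥(Matrix.orthogonalGroup (Fin 4) ℝ),
      IsClosed (H : Set ↥(Matrix.orthogonalGroup (Fin 4) ℝ)) →
      orth4SubgroupDim H ≠ 5) ∧
    (∀ H : Subgroup ↥(Matrix.orthogonalGroup (Fin 4) ℝ),
      IsClosed (H : Set ↥(Matrix.orthogonalGroup (Fin 4) ℝ)) →
      IsConnected (H : Set ↥(Matrix.orthogonalGroup (Fin 4) ℝ)) →
      orth4SubgroupDim H = 4 →
      ∃ P : ↥(Matrix.orthogonalGroup (Fin 4) ℝ),
        (fun A => P * A * P⁻¹) '' (H : Set ↥(Matrix.orthogonalGroup (Fin 4) ℝ)) = u2Set) := by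
  constructor
  · intro H hclosed h5
    have hdim := orth4SubgroupDim_eq_six_or_exists_mem_tangentSpace_iff hclosed (by norm_num [h5])
    norm_num [h5] at hdim
  · intro H hclosed hconn h4
    obtain ⟨r, hr, hmem⟩ :=
      (orth4SubgroupDim_eq_six_or_exists_mem_tangentSpace_iff hclosed h4.ge).resolve_left
        (by norm_num [h4]) |>.2
    obtain ⟨P, hP⟩ := hr.exists_conjStarAlgAut_eq_J4
    exact ⟨P, image_conj_eq_u2Set hP fun A =>
      mem_iff_commute_of_isConnected hclosed hconn hmem hP⟩

/-- `SO(4, ℝ)` has no closed connected proper subgroup of dimension `5`, and every closed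
connected `4`-dimensional subgroup of `SO(4, ℝ)` is conjugate in `O(4, ℝ)` to `U(2)`
embedded via `ℂ² ≅ ℝ⁴`. -/
theorem stmt_15 :
    (∀ H : Subgroup ↥(Matrix.orthogonalGroup (Fin 4) ℝ),
      (H : Set ↥(Matrix.orthogonalGroup (Fin 4) ℝ)) ⊆ so4Set →
      IsClosed (H : Set ↥(Matrix.orthogonalGroup (Fin 4) ℝ)) →
      IsConnected (H : Set ↥(Matrix.orthogonalGroup (Fin 4) ℝ)) →
      (H : Set ↥(Matrix.orthogonalGroup (Fin 4) ℝ)) ≠ so4Set →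
      orth4SubgroupDim H ≠ 5) ∧
    (∀ H : Subgroup ↥(Matrix.orthogonalGroup (Fin 4) ℝ),
      (H : Set ↥(Matrix.orthogonalGroup (Fin 4) ℝ)) ⊆ so4Set →
      IsClosed (H : Set ↥(Matrix.orthogonalGroup (Fin 4) ℝ)) →
      IsConnected (H : Set ↥(Matrix.orthogonalGroup (Fin 4) ℝ)) →
      orth4SubgroupDim H = 4 →
      ∃ P : ↥(Matrix.orthogonalGroup (Fin 4) ℝ),
        (fun A => P * A * P⁻¹) '' (H : Set ↥(Matrix.orthogonalGroup (Fin 4) ℝ)) = u2Set) :=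
  ⟨fun H _ hclosed _ _ => stmt_15_general.1 H hclosed,
    fun H _ hclosed hconn h4 => stmt_15_general.2 H hclosed hconn h4⟩
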